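/- Fix finite-dimensional subspaces X_n of W and G_n of G, and assume that for every x ∈ X_n there exists g ∈ G with x + g ∈ V. Then for all f, f' ∈ H with ⟨f, i g⟩_H = 0 and ⟨f', i g⟩_H = 0 for every g ∈ G, the identity ⟨R_V f − R_{V_n} f, f'⟩_H = ⟨u_V(f) − u_{V_n}(f), u_V(f') − u_{V_n}(f')⟩_W holds; consequently |⟨(R_V − R_{V_n}) f, f'⟩_H| ≤ ‖u_V(f) − u_{V_n}(f)‖_W · ‖u_V(f') − u_{V_n}(f')‖_W. -/

import Mathlib

open scoped InnerProductSpace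

/-! Since `G` is gradient-type, `⟪u, g⟫ = ⟪i u, i g⟫ = 0 = ⟪f, i g⟫` for `g ∈ G` as soon as `u ∈ V`
and `f ⟂ i(G)`. Hence the equation for `u_V(f)`, a priori tested against `V` only, holds on `V + G`.
The correction hypothesis says precisely that this larger space contains `Xₙ`, and therefore `Vₙ`,
although in general `Vₙ ⊄ V`. The Aubin–Nitsche duality argument then runs as in the conforming
case: `⟪i (u - uₙ), f'⟫ = ⟪u - uₙ, u'⟫ = ⟪u - uₙ, u' - v⟫` for every `v ∈ Vₙ`, by testing the
equation for `u'` with `u - uₙ ∈ V + G` and by Galerkin orthogonality. -/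

theorem le_sup_of_forall_exists_add_mem {R M : Type*} [Ring R] [AddCommGroup M] [Module R M]
    {p q r : Submodule R M} (h : ∀ x ∈ r, ∃ y ∈ q, x + y ∈ p) : r ≤ p ⊔ q := by
  intro x hx
  obtain ⟨y, hy, hxy⟩ := h x hx
  exact Submodule.mem_sup.2 ⟨x + y, hxy, -y, q.neg_mem hy, add_neg_cancel_right x y⟩

section

variable {𝕜 H W : Type*} [RCLike 𝕜] [NormedAddCommGroup H] [InnerProductSpace 𝕜 H]
  [SeminormedAddCommGroup W] [InnerProductSpace 𝕜 W]

/-- Gradient-type subspaces: the abstraction of `∇H¹₀(Ω) ⊆ H₀(curl; Ω)`, on which the curl part of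
the `W`-inner product vanishes. -/
def IsGradientType (i : W →ₗ[𝕜] H) (G : Submodule 𝕜 W) : Prop :=
  ∀ w, ∀ g ∈ G, ⟪w, g⟫_𝕜 = ⟪i w, i g⟫_𝕜

/-- The divergence-free subspace determined by `G`: the paper's `V`, and, for a discrete space `Gₙ`
in place of `G`, the discrete divergence constraint in `Vₙ`. -/
def divFree (i : W →ₗ[𝕜] H) (G : Submodule 𝕜 W) : Submodule 𝕜 W :=
  (G.map i)ᗮ.comap i

/-- The variational equation with datum `f` and test space `U`, solved by `u_U(f)`. Membership of
`u` in `U` is not part of the definition, so that solutions can be tested against larger spaces. -/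
def IsWeakSolutionOn (i : W →ₗ[𝕜] H) (f : H) (U : Submodule 𝕜 W) (u : W) : Prop :=
  ∀ v ∈ U, ⟪u, v⟫_𝕜 = ⟪f, i v⟫_𝕜

variable {i : W →ₗ[𝕜] H} {G U U' : Submodule 𝕜 W} {f : H} {u u' v w : W}

theorem mem_orthogonal_map_iff : f ∈ (G.map i)ᗮ ↔ ∀ g ∈ G, ⟪f, i g⟫_𝕜 = 0 := by
  simp only [Submodule.mem_orthogonal', Submodule.mem_map, forall_exists_index, and_imp,
    forall_apply_eq_imp_iff₂]

theorem mem_divFree_iff : w ∈ divFree i G ↔ ∀ g ∈ G, ⟪i w, i g⟫_𝕜 = 0 :=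
  mem_orthogonal_map_iff

theorem IsGradientType.isWeakSolutionOn (hG : IsGradientType i G) (hu : u ∈ divFree i G)
    (hf : f ∈ (G.map i)ᗮ) : IsWeakSolutionOn i f G u := fun g hg =>
  calc ⟪u, g⟫_𝕜 = ⟪i u, i g⟫_𝕜 := hG u g hg
    _ = 0 := mem_divFree_iff.1 hu g hg
    _ = ⟪f, i g⟫_𝕜 := (mem_orthogonal_map_iff.1 hf g hg).symm

namespace IsWeakSolutionOn

theorem mono (hu : IsWeakSolutionOn i f U u) (hU : U' ≤ U) : IsWeakSolutionOn i f U' u :=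
  fun v hv => hu v (hU hv)

theorem sup (hU : IsWeakSolutionOn i f U u) (hU' : IsWeakSolutionOn i f U' u) :
    IsWeakSolutionOn i f (U ⊔ U') u := by
  intro w hw
  obtain ⟨v, hv, v', hv', rfl⟩ := Submodule.mem_sup.1 hw
  rw [map_add, inner_add_right, inner_add_right, hU v hv, hU' v' hv']

theorem inner_map_left (hu : IsWeakSolutionOn i f U u) (hv : v ∈ U) : ⟪i v, f⟫_𝕜 = ⟪v, u⟫_𝕜 := by
  rw [← inner_conj_symm, ← hu v hv, inner_conj_symm]

theorem inner_sub_eq_zero (hu : IsWeakSolutionOn i f U u) (hu' : IsWeakSolutionOn i f U u')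
    (hv : v ∈ U) : ⟪u - u', v⟫_𝕜 = 0 := by
  rw [inner_sub_left, hu v hv, hu' v hv, sub_self]

end IsWeakSolutionOn

theorem stmt_11_general {Vn : Submodule 𝕜 W} {f' : H} {un : W}
    (hG : IsGradientType i G) (hVn : Vn ≤ divFree i G ⊔ G)
    (hf : f ∈ (G.map i)ᗮ) (hf' : f' ∈ (G.map i)ᗮ)
    (hu_mem : u ∈ divFree i G) (hu : IsWeakSolutionOn i f (divFree i G) u)
    (hu'_mem : u' ∈ divFree i G) (hu' : IsWeakSolutionOn i f' (divFree i G) u')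
    (hun_mem : un ∈ Vn) (hun : IsWeakSolutionOn i f Vn un) (hv : v ∈ Vn) :
    ⟪i u - i un, f'⟫_𝕜 = ⟪u - un, u' - v⟫_𝕜 ∧ ‖⟪i u - i un, f'⟫_𝕜‖ ≤ ‖u - un‖ * ‖u' - v‖ := by
  have hu_sup : IsWeakSolutionOn i f (divFree i G ⊔ G) u := hu.sup (hG.isWeakSolutionOn hu_mem hf)
  have hu'_sup : IsWeakSolutionOn i f' (divFree i G ⊔ G) u' :=
    hu'.sup (hG.isWeakSolutionOn hu'_mem hf')
  have error_mem : u - un ∈ divFree i G ⊔ G :=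
    Submodule.sub_mem _ (Submodule.mem_sup_left hu_mem) (hVn hun_mem)
  have duality : ⟪i u - i un, f'⟫_𝕜 = ⟪u - un, u' - v⟫_𝕜 :=
    calc ⟪i u - i un, f'⟫_𝕜 = ⟪u - un, u'⟫_𝕜 := by rw [← map_sub, hu'_sup.inner_map_left error_mem]
      _ = ⟪u - un, u' - v⟫_𝕜 := by
        rw [inner_sub_right, (hu_sup.mono hVn).inner_sub_eq_zero hun hv, sub_zero]
  exact ⟨duality, duality ▸ norm_inner_le_norm _ _⟩

end

/-- Setting: `H`, `W` real Hilbert spaces, `i : W → H` continuous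
linear with `‖i w‖ ≤ ‖w‖`, `G` a gradient-type closed subspace,
`V := {w : ∀ g ∈ G, ⟪i w, i g⟫ = 0}`, `Xn ≤ W` and `Gn ≤ G` finite-dimensional,
`Vn := {w ∈ Xn + Gn : ∀ g ∈ Gn, ⟪i w, i g⟫ = 0}`; assume every `x ∈ Xn` can be corrected
by some `g ∈ G` so that `x + g ∈ V`.  Then for all `f, f' ∈ H` orthogonal to `i(G)`,
writing `u = u_V(f)`, `u' = u_V(f')`, `un = u_{Vn}(f)`, `un' = u_{Vn}(f')`
(so `R_V f = i u` etc.), one has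
`⟪R_V f − R_{Vn} f, f'⟫_H = ⟪u − un, u' − un'⟫_W`, and consequently
`|⟪(R_V − R_{Vn}) f, f'⟫_H| ≤ ‖u − un‖_W · ‖u' − un'‖_W`. -/
theorem stmt_11
    {H W : Type*} [NormedAddCommGroup H] [InnerProductSpace ℝ H] [CompleteSpace H]
    [NormedAddCommGroup W] [InnerProductSpace ℝ W] [CompleteSpace W]
    (i : W →L[ℝ] H) (hi : ∀ w : W, ‖i w‖ ≤ ‖w‖)
    (G : Submodule ℝ W) (hGclosed : IsClosed (G : Set W))
    (hG : ∀ w : W, ∀ g ∈ G, ⟪w, g⟫_ℝ = ⟪i w, i g⟫_ℝ)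
    (Xn : Submodule ℝ W) (hXnfin : FiniteDimensional ℝ Xn)
    (Gn : Submodule ℝ W) (hGnG : Gn ≤ G) (hGnfin : FiniteDimensional ℝ Gn)
    (hcorrect : ∀ x ∈ Xn, ∃ g ∈ G, ∀ g' ∈ G, ⟪i (x + g), i g'⟫_ℝ = 0)
    (f f' : H) (hf : ∀ g ∈ G, ⟪f, i g⟫_ℝ = 0) (hf' : ∀ g ∈ G, ⟪f', i g⟫_ℝ = 0)
    (u : W) (humem : ∀ g ∈ G, ⟪i u, i g⟫_ℝ = 0)
    (hu : ∀ v : W, (∀ g ∈ G, ⟪i v, i g⟫_ℝ = 0) → ⟪u, v⟫_ℝ = ⟪f, i v⟫_ℝ)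
    (u' : W) (humem' : ∀ g ∈ G, ⟪i u', i g⟫_ℝ = 0)
    (hu' : ∀ v : W, (∀ g ∈ G, ⟪i v, i g⟫_ℝ = 0) → ⟪u', v⟫_ℝ = ⟪f', i v⟫_ℝ)
    (un : W) (hunmem : un ∈ Xn ⊔ Gn) (hunorth : ∀ g ∈ Gn, ⟪i un, i g⟫_ℝ = 0)
    (hun : ∀ v ∈ Xn ⊔ Gn, (∀ g ∈ Gn, ⟪i v, i g⟫_ℝ = 0) → ⟪un, v⟫_ℝ = ⟪f, i v⟫_ℝ)
    (un' : W) (hunmem' : un' ∈ Xn ⊔ Gn) (hunorth' : ∀ g ∈ Gn, ⟪i un', i g⟫_ℝ = 0)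
    (hun' : ∀ v ∈ Xn ⊔ Gn, (∀ g ∈ Gn, ⟪i v, i g⟫_ℝ = 0) → ⟪un', v⟫_ℝ = ⟪f', i v⟫_ℝ) :
    ⟪i u - i un, f'⟫_ℝ = ⟪u - un, u' - un'⟫_ℝ ∧
    |⟪i u - i un, f'⟫_ℝ| ≤ ‖u - un‖ * ‖u' - un'‖ := by
  have hXn : Xn ≤ divFree i.toLinearMap G ⊔ G :=
    le_sup_of_forall_exists_add_mem fun x hx =>
      (hcorrect x hx).imp fun _ => And.imp_right mem_divFree_iff.2
  have hVn : (Xn ⊔ Gn) ⊓ divFree i.toLinearMap Gn ≤ divFree i.toLinearMap G ⊔ G :=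
    inf_le_left.trans (sup_le hXn (hGnG.trans le_sup_right))
  exact stmt_11_general (i := i.toLinearMap) hG hVn
    (mem_orthogonal_map_iff.2 hf) (mem_orthogonal_map_iff.2 hf')
    (mem_divFree_iff.2 humem) (fun v hv => hu v (mem_divFree_iff.1 hv))
    (mem_divFree_iff.2 humem') (fun v hv => hu' v (mem_divFree_iff.1 hv))
    ⟨hunmem, mem_divFree_iff.2 hunorth⟩ (fun v hv => hun v hv.1 (mem_divFree_iff.1 hv.2))
    ⟨hunmem', mem_divFree_iff.2 hunorth'⟩
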